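/- Let d ≥ 1, let b : ℝ^d → ℝ^d satisfy Assumptions (A) and set M₁ := K/2, M₂ := L·(max(R, 2|b(0)|/K))² + |b(0)|·max(R, 2|b(0)|/K). Let E be a measurable space, b̄ : ℝ^d × E → ℝ^d measurable, and let σ, α > 0. On a probability space let (ξ_k)_{k≥1} be i.i.d. with law the d-fold product of standard Gaussians N(0,1), let (U_k)_{k≥0} be i.i.d. E-valued random variables, and let X̄₀ be an ℝ^d-valued random variable with 𝔼|X̄₀|² < ∞, with X̄₀, (ξ_k), (U_k) jointly independent; assume that for all x ∈ ℝ^d and all k: 𝔼[b̄(x, U_k)] = b(x) and 𝔼|b̄(x, U_k) − b(x)|² ≤ σ²(1 + |x|²)·h^α. Define the randomized Euler chain X̄_{k+1} := X̄_k + h·b̄(X̄_k, U_k) + √h·ξ_{k+1} for k ≥ 0. Then for every h with 0 < h < min(K/(4L² + 2σ²), 1) and every k ≥ 1: 𝔼|X̄_k|² ≤ 𝔼|X̄₀|² + (2h|b(0)|² + d + M₂ + hσ²)/(M₁ − 2hL² − hσ²). -/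

import Mathlib

open scoped Classical
open MeasureTheory ProbabilityTheory

/-- Standard Gaussian measure `N(0, I)` on `EuclideanSpace ℝ (Fin d)`
(the `d`-fold product of standard Gaussians `N(0,1)`). -/
noncomputable def stdGaussian (d : ℕ) : Measure (EuclideanSpace ℝ (Fin d)) :=
  (Measure.pi fun _ : Fin d => gaussianReal 0 1).map
    (MeasurableEquiv.toLp 2 (Fin d → ℝ))

/-! Given `X n = x`, the drift step `x + h • bb x (U n)` has mean `x + h • b x`, so its second
moment is `‖x + h • b x‖ ^ 2` plus `h ^ 2` times the variance of the estimator. Dissipativity at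
infinity and the Lipschitz bound make `b` satisfy a Lyapunov inequality, which turns this into
`e (n + 1) ≤ (1 - δ) * e n + A` for the second moments `e n`, and such a recursion is bounded by
`e 0 + A / δ`. Independence of `X n` and `U n` replaces the conditioning by Fubini on a product
space.

Integrability is propagated backwards: if `X (n + 1)` is square integrable, then so is `X n`,
because `‖x + h • b x‖ ≥ (1 - h * L) * ‖x‖ - h * ‖b 0‖` and `h * L < 1`. If `X (n + 1)` is not, its
second moment is `0` by the convention for the integral.
-/

open scoped RealInnerProductSpace

theorem le_add_div_of_succ_le_one_sub_mul_add {e : ℕ → ℝ} {δ A : ℝ} (hδ : 0 < δ) (hδ1 : δ ≤ 1)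
    (hA : 0 ≤ A) (he0 : 0 ≤ e 0) (he : ∀ n, e (n + 1) ≤ (1 - δ) * e n + A) (n : ℕ) :
    e n ≤ e 0 + A / δ := by
  induction n with
  | zero => exact le_add_of_nonneg_right (by positivity)
  | succ n ih =>
    calc e (n + 1) ≤ (1 - δ) * (e 0 + A / δ) + A := (he n).trans (by gcongr)
      _ = e 0 + A / δ - δ * e 0 := by field_simp; ring
      _ ≤ e 0 + A / δ := sub_le_self _ (by positivity)

section Lipschitz

theorem norm_le_mul_norm_add_norm_map_zero {H : Type*} [SeminormedAddCommGroup H]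
    {b : H → H} {L : ℝ} (hLip : ∀ x y, ‖b x - b y‖ ≤ L * ‖x - y‖) (x : H) :
    ‖b x‖ ≤ L * ‖x‖ + ‖b 0‖ := by
  have h0 : ‖b x - b 0‖ ≤ L * ‖x‖ := by simpa using hLip x 0
  linarith [norm_sub_norm_le (b x) (b 0)]

theorem memLp_of_memLp_add_smul {H Ω : Type*} [NormedAddCommGroup H] [NormedSpace ℝ H]
    [MeasurableSpace Ω] {P : Measure Ω} [IsFiniteMeasure P] {p : ENNReal} {X : Ω → H} {b : H → H}
    {L h : ℝ} (hX : AEStronglyMeasurable X P) (hLip : ∀ x y, ‖b x - b y‖ ≤ L * ‖x - y‖)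
    (hh : 0 ≤ h) (hhL : h * L < 1) (hXb : MemLp (fun ω => X ω + h • b (X ω)) p P) :
    MemLp X p P := by
  refine (hXb.norm.add (memLp_const (h * ‖b 0‖))).of_le_mul (c := (1 - h * L)⁻¹) hX
    (.of_forall fun ω => ?_)
  have htri : ‖X ω‖ ≤ ‖X ω + h • b (X ω)‖ + h * ‖b (X ω)‖ := by
    simpa [norm_smul, abs_of_nonneg hh] using norm_sub_le (X ω + h • b (X ω)) (h • b (X ω))
  have hgrowth := mul_le_mul_of_nonneg_left (norm_le_mul_norm_add_norm_map_zero hLip (X ω)) hh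
  rw [Pi.add_apply, Real.norm_of_nonneg (by positivity), le_inv_mul_iff₀ (by linarith)]
  linarith

end Lipschitz

section Drift

variable {H : Type*} [NormedAddCommGroup H] [InnerProductSpace ℝ H] {b : H → H} {L K R r h : ℝ}

/-- Dissipativity at infinity: contractivity at infinity tested against the origin only, which is
all that the Lyapunov estimate needs. -/
def DissipativeAtInfinity (b : H → H) (K R : ℝ) : Prop :=
  ∀ x, R < ‖x‖ → ⟪x, b x - b 0⟫ ≤ -K * ‖x‖ ^ 2

theorem DissipativeAtInfinity.le_of_lipschitz [Nontrivial H] (hb : DissipativeAtInfinity b K R)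
    (hLip : ∀ x y, ‖b x - b y‖ ≤ L * ‖x - y‖) : K ≤ L := by
  obtain ⟨x, hx⟩ := NormedSpace.exists_lt_norm ℝ H |R|
  have hx0 : 0 < ‖x‖ := (abs_nonneg R).trans_lt hx
  have hlower : -⟪x, b x - b 0⟫ ≤ ‖x‖ * ‖b x - b 0‖ :=
    (neg_le_abs _).trans (abs_real_inner_le_norm _ _)
  have hupper : ‖b x - b 0‖ ≤ L * ‖x‖ := by simpa using hLip x 0
  refine le_of_mul_le_mul_right ?_ (pow_pos hx0 2)
  calc K * ‖x‖ ^ 2 ≤ -⟪x, b x - b 0⟫ := by linarith [hb x ((le_abs_self R).trans_lt hx)]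
    _ ≤ ‖x‖ * (L * ‖x‖) := hlower.trans (by gcongr)
    _ = L * ‖x‖ ^ 2 := by ring

theorem DissipativeAtInfinity.inner_le (hb : DissipativeAtInfinity b K R) {x : H} (hx : R < ‖x‖) :
    ⟪x, b x⟫ ≤ -K * ‖x‖ ^ 2 + ‖b 0‖ * ‖x‖ := by
  have hinner := hb x hx
  rw [inner_sub_right] at hinner
  linarith [real_inner_le_norm x (b 0)]

-- The point `2 r x / ‖x‖` of the ray through `x` is in the dissipative region, and the Lipschitz
-- bound carries the estimate back to `x`.
theorem DissipativeAtInfinity.inner_le_of_norm_le (hb : DissipativeAtInfinity b K R)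
    (hLip : ∀ x y, ‖b x - b y‖ ≤ L * ‖x - y‖) (hK : 0 ≤ K) (hL : 0 ≤ L) (hr : R ≤ r) {x : H}
    (hx : ‖x‖ ≤ r) : ⟪x, b x⟫ ≤ L * r ^ 2 + ‖b 0‖ * r - K / 2 * ‖x‖ ^ 2 := by
  obtain rfl | hx0 := eq_or_ne x 0
  · have hr0 : 0 ≤ r := (norm_nonneg _).trans hx
    simp only [inner_zero_left, norm_zero]
    nlinarith [mul_nonneg hL (sq_nonneg r), mul_nonneg (norm_nonneg (b 0)) hr0]
  have ht : 0 < ‖x‖ := norm_pos_iff.2 hx0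
  set s : ℝ := 2 * r / ‖x‖ with hs
  have hst : s * ‖x‖ = 2 * r := div_mul_cancel₀ _ ht.ne'
  have hs1 : 1 ≤ s := by rw [hs, le_div_iff₀ ht]; linarith
  have hfar : ‖s • x‖ = 2 * r := by rw [norm_smul, Real.norm_of_nonneg (by linarith), hst]
  have hray : ⟪x, b (s • x)⟫ ≤ (‖b 0‖ - 2 * K * r) * ‖x‖ := by
    have hinner := hb.inner_le (x := s • x) (by linarith)
    rw [hfar, real_inner_smul_left] at hinner
    refine le_of_mul_le_mul_left (a := s) ?_ (by linarith)
    linear_combination hinner - (‖b 0‖ - 2 * K * r) * hst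
  have hback : ⟪x, b x - b (s • x)⟫ ≤ ‖x‖ * (L * (2 * r - ‖x‖)) := by
    refine (real_inner_le_norm _ _).trans (mul_le_mul_of_nonneg_left ?_ ht.le)
    have hdist : ‖x - s • x‖ = 2 * r - ‖x‖ := by
      have hsub : x - s • x = (1 - s) • x := by rw [sub_smul, one_smul]
      rw [hsub, norm_smul, Real.norm_of_nonpos (by linarith), ← hst]
      ring
    exact hdist ▸ hLip x (s • x)
  rw [inner_sub_right] at hback
  have hsq : L * (‖x‖ * (2 * r - ‖x‖)) ≤ L * r ^ 2 := by
    gcongr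
    linarith [sq_nonneg (r - ‖x‖)]
  have hb0 : ‖b 0‖ * ‖x‖ ≤ ‖b 0‖ * r := by gcongr
  have hKr : K * ‖x‖ ^ 2 ≤ K * (r * ‖x‖) := by rw [sq]; gcongr
  have hKx : 0 ≤ K * ‖x‖ ^ 2 := by positivity
  linarith

theorem DissipativeAtInfinity.lyapunov (hb : DissipativeAtInfinity b K R)
    (hLip : ∀ x y, ‖b x - b y‖ ≤ L * ‖x - y‖) (hK : 0 ≤ K) (hL : 0 ≤ L) (hr : R ≤ r)
    (hr' : 2 * ‖b 0‖ ≤ K * r) (hr0 : 0 ≤ r) (x : H) :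
    ⟪x, b x⟫ ≤ L * r ^ 2 + ‖b 0‖ * r - K / 2 * ‖x‖ ^ 2 := by
  obtain hx | hx := le_or_gt ‖x‖ r
  · exact hb.inner_le_of_norm_le hLip hK hL hr hx
  have hlinear : ‖b 0‖ * ‖x‖ ≤ K / 2 * ‖x‖ ^ 2 := by
    have hb0 : ‖b 0‖ ≤ K / 2 * ‖x‖ := by linarith [mul_le_mul_of_nonneg_left hx.le hK]
    calc ‖b 0‖ * ‖x‖ ≤ K / 2 * ‖x‖ * ‖x‖ := by gcongr
      _ = K / 2 * ‖x‖ ^ 2 := by ring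
  have hconst : 0 ≤ L * r ^ 2 + ‖b 0‖ * r := by positivity
  linarith [hb.inner_le (hr.trans_lt hx)]

theorem norm_add_smul_sq_le {M₁ M₂ : ℝ} (hLip : ∀ x y, ‖b x - b y‖ ≤ L * ‖x - y‖)
    (hlyap : ∀ x, ⟪x, b x⟫ ≤ M₂ - M₁ * ‖x‖ ^ 2) (hh : 0 ≤ h) (x : H) :
    ‖x + h • b x‖ ^ 2
      ≤ (1 - 2 * h * M₁ + 2 * h ^ 2 * L ^ 2) * ‖x‖ ^ 2 + 2 * h * M₂ + 2 * h ^ 2 * ‖b 0‖ ^ 2 := by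
  have hgrowth : ‖b x‖ ^ 2 ≤ 2 * L ^ 2 * ‖x‖ ^ 2 + 2 * ‖b 0‖ ^ 2 :=
    calc ‖b x‖ ^ 2 ≤ (L * ‖x‖ + ‖b 0‖) ^ 2 := by
          gcongr
          exact norm_le_mul_norm_add_norm_map_zero hLip x
      _ ≤ 2 * ((L * ‖x‖) ^ 2 + ‖b 0‖ ^ 2) := add_sq_le
      _ = 2 * L ^ 2 * ‖x‖ ^ 2 + 2 * ‖b 0‖ ^ 2 := by ring
  calc ‖x + h • b x‖ ^ 2 = ‖x‖ ^ 2 + 2 * h * ⟪x, b x⟫ + h ^ 2 * ‖b x‖ ^ 2 := by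
        rw [norm_add_sq_real, real_inner_smul_right, norm_smul, mul_pow, Real.norm_eq_abs, sq_abs]
        ring
    _ ≤ ‖x‖ ^ 2 + 2 * h * (M₂ - M₁ * ‖x‖ ^ 2)
          + h ^ 2 * (2 * L ^ 2 * ‖x‖ ^ 2 + 2 * ‖b 0‖ ^ 2) := by
        gcongr
        exact hlyap x
    _ = _ := by ring

end Drift

section Moments

variable {H : Type*} [NormedAddCommGroup H] [InnerProductSpace ℝ H] [CompleteSpace H]
  [MeasurableSpace H] [BorelSpace H]
  {Ω : Type*} [MeasurableSpace Ω] {P : Measure Ω} [IsProbabilityMeasure P]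

theorem integral_norm_add_sq_of_indepFun {V W : Ω → H} (hVW : IndepFun V W P) (hV : MemLp V 2 P)
    (hW : MemLp W 2 P) (hW0 : ∫ ω, W ω ∂P = 0) :
    ∫ ω, ‖V ω + W ω‖ ^ 2 ∂P = ∫ ω, ‖V ω‖ ^ 2 ∂P + ∫ ω, ‖W ω‖ ^ 2 ∂P := by
  have hVi : Integrable V P := hV.integrable one_le_two
  have hWi : Integrable W P := hW.integrable one_le_two
  have hcross : ∫ ω, ⟪V ω, W ω⟫ ∂P = ⟪∫ ω, V ω ∂P, ∫ ω, W ω ∂P⟫ :=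
    hVW.integral_bilin hVi hWi (innerSL ℝ)
  have hcross_int : Integrable (fun ω => 2 * ⟪V ω, W ω⟫) P :=
    (hVW.integrable_bilin hVi hWi (innerSL ℝ)).const_mul 2
  have hV2 : Integrable (fun ω => ‖V ω‖ ^ 2) P := hV.integrable_norm_pow two_ne_zero
  have hW2 : Integrable (fun ω => ‖W ω‖ ^ 2) P := hW.integrable_norm_pow two_ne_zero
  simp_rw [norm_add_sq_real]
  rw [integral_add (by exact hV2.add hcross_int) hW2, integral_add hV2 hcross_int,
    integral_const_mul, hcross, hW0, inner_zero_right, mul_zero, add_zero]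

theorem integral_norm_add_smul_sq {f : Ω → H} (hf : MemLp f 2 P) (x : H) (h : ℝ) :
    ∫ ω, ‖x + h • f ω‖ ^ 2 ∂P
      = ‖x + h • ∫ ω, f ω ∂P‖ ^ 2 + h ^ 2 * ∫ ω, ‖f ω - ∫ ω, f ω ∂P‖ ^ 2 ∂P := by
  set c := ∫ ω, f ω ∂P with hc
  have hcentered : ∫ ω, h • (f ω - c) ∂P = 0 := by
    rw [integral_smul, integral_sub (hf.integrable one_le_two) (integrable_const c)]
    simp [hc]
  have hsplit := integral_norm_add_sq_of_indepFun (indepFun_const_left (x + h • c) _)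
    (memLp_const _) ((hf.sub (memLp_const c)).const_smul h) hcentered
  have hrecenter (ω : Ω) : x + h • c + h • (f ω - c) = x + h • f ω := by rw [smul_sub]; abel
  simpa [hrecenter, norm_smul, mul_pow, integral_const_mul] using hsplit

end Moments

section Decoupled

variable {H : Type*} [NormedAddCommGroup H] [InnerProductSpace ℝ H]
  [MeasurableSpace H] [BorelSpace H] [SecondCountableTopology H]
  {Ω Ω' : Type*} [MeasurableSpace Ω] [MeasurableSpace Ω'] {P : Measure Ω} [IsProbabilityMeasure P]
  {Q : Measure Ω'} [IsProbabilityMeasure Q] {X : Ω → H} {f : H → Ω' → H} {b : H → H} {h : ℝ}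

theorem ae_memLp_of_memLp_prod (hf : Measurable (Function.uncurry f)) (hh : h ≠ 0)
    (hV : MemLp (fun p : Ω × Ω' => X p.1 + h • f (X p.1) p.2) 2 (P.prod Q)) :
    ∀ᵐ ω ∂P, MemLp (f (X ω)) 2 Q := by
  filter_upwards [(hV.integrable_norm_pow two_ne_zero).prod_right_ae] with ω hω
  have hfω : Measurable (f (X ω)) := hf.comp measurable_prodMk_left
  have hstep : MemLp (fun ω' => X ω + h • f (X ω) ω') 2 Q :=
    (memLp_two_iff_integrable_sq_norm (by fun_prop)).2 hω
  simpa [Pi.smul_def, smul_smul, inv_mul_cancel₀ hh]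
    using (hstep.sub (memLp_const (X ω))).const_smul h⁻¹

variable [CompleteSpace H]

theorem ae_integral_norm_add_smul_sq (hf : Measurable (Function.uncurry f)) (hh : h ≠ 0)
    (hmean : ∀ x, ∫ ω', f x ω' ∂Q = b x)
    (hV : MemLp (fun p : Ω × Ω' => X p.1 + h • f (X p.1) p.2) 2 (P.prod Q)) :
    ∀ᵐ ω ∂P, ∫ ω', ‖X ω + h • f (X ω) ω'‖ ^ 2 ∂Q
      = ‖X ω + h • b (X ω)‖ ^ 2 + h ^ 2 * ∫ ω', ‖f (X ω) ω' - b (X ω)‖ ^ 2 ∂Q := by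
  filter_upwards [ae_memLp_of_memLp_prod hf hh hV] with ω hω
  simpa only [hmean] using integral_norm_add_smul_sq hω (X ω) h

theorem memLp_add_smul_mean (hX : Measurable X) (hf : Measurable (Function.uncurry f))
    (hh : h ≠ 0) (hmean : ∀ x, ∫ ω', f x ω' ∂Q = b x)
    (hV : MemLp (fun p : Ω × Ω' => X p.1 + h • f (X p.1) p.2) 2 (P.prod Q)) :
    MemLp (fun ω => X ω + h • b (X ω)) 2 P := by
  have hb : Measurable b := by
    simpa only [Function.uncurry_apply_pair, hmean]
      using (hf.stronglyMeasurable.integral_prod_right' (ν := Q)).measurable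
  have hm : Measurable fun ω => X ω + h • b (X ω) := hX.add ((hb.comp hX).const_smul h)
  rw [memLp_two_iff_integrable_sq_norm hm.aestronglyMeasurable]
  refine (hV.integrable_norm_pow two_ne_zero).integral_prod_left.mono'
    (hm.norm.pow_const 2).aestronglyMeasurable ?_
  filter_upwards [ae_integral_norm_add_smul_sq hf hh hmean hV] with ω hω
  rw [Real.norm_of_nonneg (by positivity), hω]
  have hvar : 0 ≤ ∫ ω', ‖f (X ω) ω' - b (X ω)‖ ^ 2 ∂Q := integral_nonneg fun _ => by positivity
  exact le_add_of_nonneg_right (mul_nonneg (sq_nonneg h) hvar)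

theorem integral_norm_add_smul_sq_prod_le {L M₁ M₂ σ : ℝ} (hf : Measurable (Function.uncurry f))
    (hmean : ∀ x, ∫ ω', f x ω' ∂Q = b x)
    (hvar : ∀ x, ∫ ω', ‖f x ω' - b x‖ ^ 2 ∂Q ≤ σ ^ 2 * (1 + ‖x‖ ^ 2))
    (hLip : ∀ x y, ‖b x - b y‖ ≤ L * ‖x - y‖) (hlyap : ∀ x, ⟪x, b x⟫ ≤ M₂ - M₁ * ‖x‖ ^ 2)
    (hh : 0 < h) (hX : MemLp X 2 P)
    (hV : MemLp (fun p : Ω × Ω' => X p.1 + h • f (X p.1) p.2) 2 (P.prod Q)) :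
    ∫ p, ‖X p.1 + h • f (X p.1) p.2‖ ^ 2 ∂(P.prod Q)
      ≤ (1 - h * (2 * M₁ - 2 * h * L ^ 2 - h * σ ^ 2)) * ∫ ω, ‖X ω‖ ^ 2 ∂P
        + h * (2 * M₂ + 2 * h * ‖b 0‖ ^ 2 + h * σ ^ 2) := by
  have hV2 := hV.integrable_norm_pow two_ne_zero
  have hX2 := hX.integrable_norm_pow two_ne_zero
  have hbound : ∀ᵐ ω ∂P, ∫ ω', ‖X ω + h • f (X ω) ω'‖ ^ 2 ∂Q
      ≤ (1 - h * (2 * M₁ - 2 * h * L ^ 2 - h * σ ^ 2)) * ‖X ω‖ ^ 2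
        + h * (2 * M₂ + 2 * h * ‖b 0‖ ^ 2 + h * σ ^ 2) := by
    filter_upwards [ae_integral_norm_add_smul_sq hf hh.ne' hmean hV] with ω hω
    rw [hω]
    linarith [norm_add_smul_sq_le hLip hlyap hh.le (X ω),
      mul_le_mul_of_nonneg_left (hvar (X ω)) (sq_nonneg h)]
  rw [integral_prod _ hV2]
  refine (integral_mono_ae hV2.integral_prod_left
    ((hX2.const_mul _).add (integrable_const _)) hbound).trans_eq ?_
  rw [integral_add' (hX2.const_mul _) (integrable_const _), integral_const_mul]
  simp

end Decoupled

section Gaussian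

theorem integral_norm_sq_stdGaussian (H : Type*) [NormedAddCommGroup H] [InnerProductSpace ℝ H]
    [FiniteDimensional ℝ H] [MeasurableSpace H] [BorelSpace H] :
    ∫ x, ‖x‖ ^ 2 ∂(ProbabilityTheory.stdGaussian H) = Module.finrank ℝ H := by
  set γ := ProbabilityTheory.stdGaussian H
  set e := stdOrthonormalBasis ℝ H
  have hcoord (i) : MemLp (fun x => ⟪e i, x⟫) 2 γ :=
    (innerSL ℝ (e i)).comp_memLp' IsGaussian.memLp_two_id
  have hsq (i) : ∫ x, ⟪e i, x⟫ ^ 2 ∂γ = 1 := by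
    have hvar := variance_dual_stdGaussian (innerSL ℝ (e i))
    rw [variance_of_integral_eq_zero (by fun_prop) (integral_strongDual_stdGaussian _)] at hvar
    simpa using hvar
  calc ∫ x, ‖x‖ ^ 2 ∂γ = ∫ x, ∑ i, ⟪e i, x⟫ ^ 2 ∂γ := by
        simp only [← e.sum_sq_norm_inner_right, Real.norm_eq_abs, sq_abs]
    _ = ∑ i, ∫ x, ⟪e i, x⟫ ^ 2 ∂γ := integral_finsetSum _ fun i _ => (hcoord i).integrable_sq
    _ = Module.finrank ℝ H := by simp [hsq]

theorem stdGaussian_eq_stdGaussian_euclideanSpace (d : ℕ) :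
    _root_.stdGaussian d = ProbabilityTheory.stdGaussian (EuclideanSpace ℝ (Fin d)) :=
  map_pi_eq_stdGaussian

end Gaussian

section Independence

theorem identDistrib_prodMk_of_indepFun {Ω α β : Type*} [MeasurableSpace Ω] [MeasurableSpace α]
    [MeasurableSpace β] {P : Measure Ω} [IsFiniteMeasure P] {X : Ω → α} {Y : Ω → β}
    (hX : Measurable X) (hY : Measurable Y) (hXY : IndepFun X Y P) :
    IdentDistrib (fun ω => (X ω, Y ω)) (Prod.map X Y) P (P.prod P) where
  aemeasurable_fst := (hX.prodMk hY).aemeasurable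
  aemeasurable_snd := (hX.prodMap hY).aemeasurable
  map_eq := by
    rw [hXY.map_prod_eq_prod_map_map hX.aemeasurable hY.aemeasurable,
      Measure.map_prod_map _ _ hX hY]

theorem indep_biSup_compl_singleton {Ω ι : Type*} {mΩ : MeasurableSpace Ω} {P : Measure Ω}
    {m : ι → MeasurableSpace Ω} (hle : ∀ i, m i ≤ mΩ) (hm : iIndep m P) (i : ι) :
    Indep (⨆ j ∈ ({i}ᶜ : Set ι), m j) (m i) P := by
  simpa only [iSup_singleton] using
    indep_iSup_of_disjoint hle hm (disjoint_compl_left : Disjoint {i}ᶜ {i})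

end Independence

section Measurability

variable {H E Ω : Type*} [NormedAddCommGroup H] [NormedSpace ℝ H] [MeasurableSpace H]
  [BorelSpace H] [SecondCountableTopology H] [MeasurableSpace E] {_ : MeasurableSpace Ω}
  {f : H → E → H} {h : ℝ}

theorem measurable_add_smul_uncurry (hf : Measurable (Function.uncurry f)) {X : Ω → H} {U : Ω → E}
    (hX : Measurable X) (hU : Measurable U) : Measurable fun ω => X ω + h • f (X ω) (U ω) :=
  hX.add ((hf.comp (hX.prodMk hU)).const_smul h)

theorem measurable_of_euler_step (hf : Measurable (Function.uncurry f)) {X ξ : ℕ → Ω → H}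
    {U : ℕ → Ω → E} {n : ℕ}
    (hstep : ∀ k ω, X (k + 1) ω = X k ω + h • f (X k ω) (U k ω) + Real.sqrt h • ξ (k + 1) ω)
    (hX0 : Measurable (X 0)) (hξ : ∀ k < n, Measurable (ξ (k + 1)))
    (hU : ∀ k < n, Measurable (U k)) : Measurable (X n) := by
  induction n with
  | zero => exact hX0
  | succ n ih =>
    have hXn : Measurable (X n) :=
      ih (fun k hk => hξ k (hk.trans n.lt_succ_self)) fun k hk => hU k (hk.trans n.lt_succ_self)
    rw [funext (hstep n)]
    exact (measurable_add_smul_uncurry hf hXn (hU n n.lt_succ_self)).add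
      ((hξ n n.lt_succ_self).const_smul (Real.sqrt h))

end Measurability

/-- The `σ`-algebras generated by the independent inputs of the randomized Euler chain, in one
family: `none` is the index of the initial value, `some (.inl k)` that of the noise `ξ k` and
`some (.inr k)` that of the drift sample `U k`. -/
abbrev inputSigmaAlgebra {H E Ω : Type*} [MeasurableSpace H] [MeasurableSpace E] (X₀ : Ω → H)
    (ξ : ℕ → Ω → H) (U : ℕ → Ω → E) (i : Option (ℕ ⊕ ℕ)) : MeasurableSpace Ω :=
  i.elim (MeasurableSpace.comap X₀ inferInstance)
    (Sum.elim (fun k => MeasurableSpace.comap (ξ k) inferInstance)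
      (fun k => MeasurableSpace.comap (U k) inferInstance))

/-- The randomized Euler chain with step size `h` and drift estimator `bb`, driven by the noise `ξ`
and the drift samples `U`, from a square integrable initial value, all inputs being jointly
independent. The noise used in step `n` has index `n + 1`, and nothing is assumed on the laws of `ξ`
and `U`. -/
structure IsRandomizedEulerChain {H E Ω : Type*} [NormedAddCommGroup H] [NormedSpace ℝ H]
    [MeasurableSpace H] [MeasurableSpace E] [MeasurableSpace Ω] (P : Measure Ω) (bb : H → E → H)
    (h : ℝ) (X ξ : ℕ → Ω → H) (U : ℕ → Ω → E) : Prop where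
  measurable_estimator : Measurable (Function.uncurry bb)
  measurable_zero : Measurable (X 0)
  memLp_zero : MemLp (X 0) 2 P
  measurable_noise : ∀ k, Measurable (ξ k)
  measurable_sample : ∀ k, Measurable (U k)
  iIndep : iIndep (inputSigmaAlgebra (X 0) ξ U) P
  step : ∀ n ω, X (n + 1) ω = X n ω + h • bb (X n ω) (U n ω) + Real.sqrt h • ξ (n + 1) ω

namespace IsRandomizedEulerChain

section NormedSpace

variable {H E Ω : Type*} [NormedAddCommGroup H] [NormedSpace ℝ H] [MeasurableSpace H]
  [MeasurableSpace E] [mΩ : MeasurableSpace Ω] {P : Measure Ω} {bb : H → E → H} {h : ℝ}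
  {X ξ : ℕ → Ω → H} {U : ℕ → Ω → E} {n : ℕ}

theorem inputSigmaAlgebra_le (hX : IsRandomizedEulerChain P bb h X ξ U) (i : Option (ℕ ⊕ ℕ)) :
    inputSigmaAlgebra (X 0) ξ U i ≤ mΩ := by
  obtain _ | k | k := i
  · exact hX.measurable_zero.comap_le
  · exact (hX.measurable_noise k).comap_le
  · exact (hX.measurable_sample k).comap_le

theorem memLp_drift (hX : IsRandomizedEulerChain P bb h X ξ U) (hξ : MemLp (ξ (n + 1)) 2 P)
    (hXn : MemLp (X (n + 1)) 2 P) : MemLp (fun ω => X n ω + h • bb (X n ω) (U n ω)) 2 P := by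
  convert hXn.sub (hξ.const_smul (Real.sqrt h)) using 1
  ext1 ω
  simp [hX.step n ω]

variable [BorelSpace H] [SecondCountableTopology H]

theorem measurable (hX : IsRandomizedEulerChain P bb h X ξ U) (n : ℕ) : Measurable (X n) :=
  measurable_of_euler_step hX.measurable_estimator hX.step hX.measurable_zero
    (fun _ _ => hX.measurable_noise _) fun _ _ => hX.measurable_sample _

theorem measurable_biSup_inputSigmaAlgebra (hX : IsRandomizedEulerChain P bb h X ξ U)
    {A : Set (Option (ℕ ⊕ ℕ))} (h0 : none ∈ A) (hξ : ∀ k < n, some (.inl (k + 1)) ∈ A)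
    (hU : ∀ k < n, some (.inr k) ∈ A) :
    Measurable[⨆ i ∈ A, inputSigmaAlgebra (X 0) ξ U i] (X n) := by
  have hmem {i : Option (ℕ ⊕ ℕ)} (hi : i ∈ A) :
      inputSigmaAlgebra (X 0) ξ U i ≤ ⨆ i ∈ A, inputSigmaAlgebra (X 0) ξ U i :=
    le_biSup (inputSigmaAlgebra (X 0) ξ U) hi
  exact measurable_of_euler_step hX.measurable_estimator hX.step
    ((comap_measurable _).mono (hmem h0) le_rfl)
    (fun k hk => (comap_measurable _).mono (hmem (hξ k hk)) le_rfl)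
    fun k hk => (comap_measurable _).mono (hmem (hU k hk)) le_rfl

theorem indepFun_sample (hX : IsRandomizedEulerChain P bb h X ξ U) (n : ℕ) :
    IndepFun (X n) (U n) P := by
  rw [IndepFun_iff_Indep]
  refine indep_of_indep_of_le_left
    (indep_biSup_compl_singleton hX.inputSigmaAlgebra_le hX.iIndep (some (.inr n))) ?_
  exact (hX.measurable_biSup_inputSigmaAlgebra (by simp) (by simp)
    fun k hk => by simpa using hk.ne).comap_le

theorem indepFun_noise (hX : IsRandomizedEulerChain P bb h X ξ U) (n : ℕ) :
    IndepFun (fun ω => X n ω + h • bb (X n ω) (U n ω)) (ξ (n + 1)) P := by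
  rw [IndepFun_iff_Indep]
  refine indep_of_indep_of_le_left
    (indep_biSup_compl_singleton hX.inputSigmaAlgebra_le hX.iIndep (some (.inl (n + 1)))) ?_
  refine (measurable_add_smul_uncurry hX.measurable_estimator
    (hX.measurable_biSup_inputSigmaAlgebra (by simp) (fun k hk => by simpa using hk.ne)
      (by simp)) ?_).comap_le
  have hmem : some (.inr n) ∈ ({some (.inl (n + 1))}ᶜ : Set (Option (ℕ ⊕ ℕ))) := by simp
  exact (comap_measurable (U n)).mono (le_biSup (inputSigmaAlgebra (X 0) ξ U) hmem) le_rfl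

theorem identDistrib_drift [IsFiniteMeasure P] (hX : IsRandomizedEulerChain P bb h X ξ U)
    (n : ℕ) : IdentDistrib (fun ω => X n ω + h • bb (X n ω) (U n ω))
      (fun p : Ω × Ω => X n p.1 + h • bb (X n p.1) (U n p.2)) P (P.prod P) :=
  (identDistrib_prodMk_of_indepFun (hX.measurable n) (hX.measurable_sample n)
    (hX.indepFun_sample n)).comp (u := fun q : H × E => q.1 + h • bb q.1 q.2)
    (measurable_fst.add (hX.measurable_estimator.const_smul h))

end NormedSpace

section InnerProductSpace

variable {H E Ω : Type*} [NormedAddCommGroup H] [InnerProductSpace ℝ H] [CompleteSpace H]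
  [MeasurableSpace H] [BorelSpace H] [SecondCountableTopology H] [MeasurableSpace E]
  [MeasurableSpace Ω] {P : Measure Ω} [IsProbabilityMeasure P] {bb : H → E → H} {h : ℝ}
  {X ξ : ℕ → Ω → H} {U : ℕ → Ω → E} {n : ℕ} {b : H → H} {L M₁ M₂ σ v : ℝ}

theorem integral_norm_sq_succ_eq (hX : IsRandomizedEulerChain P bb h X ξ U) (hh : 0 ≤ h)
    (hξ : MemLp (ξ (n + 1)) 2 P) (hξ0 : ∫ ω, ξ (n + 1) ω ∂P = 0) (hXn : MemLp (X (n + 1)) 2 P) :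
    ∫ ω, ‖X (n + 1) ω‖ ^ 2 ∂P
      = ∫ ω, ‖X n ω + h • bb (X n ω) (U n ω)‖ ^ 2 ∂P + h * ∫ ω, ‖ξ (n + 1) ω‖ ^ 2 ∂P := by
  have hind := (hX.indepFun_noise n).comp measurable_id (measurable_const_smul (Real.sqrt h))
  have hsplit := integral_norm_add_sq_of_indepFun hind (hX.memLp_drift hξ hXn)
    (hξ.const_smul (Real.sqrt h)) (by simp [integral_smul, hξ0])
  simpa [hX.step n, norm_smul, mul_pow, integral_const_mul, Real.sq_sqrt hh] using hsplit

theorem integral_norm_sq_succ_le_of_memLp (hX : IsRandomizedEulerChain P bb h X ξ U)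
    (hh : 0 < h) (hhL : h * L < 1) (hLip : ∀ x y, ‖b x - b y‖ ≤ L * ‖x - y‖)
    (hlyap : ∀ x, ⟪x, b x⟫ ≤ M₂ - M₁ * ‖x‖ ^ 2) (hmean : ∀ x, ∫ ω, bb x (U n ω) ∂P = b x)
    (hvar : ∀ x, ∫ ω, ‖bb x (U n ω) - b x‖ ^ 2 ∂P ≤ σ ^ 2 * (1 + ‖x‖ ^ 2))
    (hξ : MemLp (ξ (n + 1)) 2 P) (hξ0 : ∫ ω, ξ (n + 1) ω ∂P = 0)
    (hξv : ∫ ω, ‖ξ (n + 1) ω‖ ^ 2 ∂P ≤ v) (hXn : MemLp (X (n + 1)) 2 P) :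
    ∫ ω, ‖X (n + 1) ω‖ ^ 2 ∂P
      ≤ (1 - h * (2 * M₁ - 2 * h * L ^ 2 - h * σ ^ 2)) * ∫ ω, ‖X n ω‖ ^ 2 ∂P
        + h * (2 * M₂ + 2 * h * ‖b 0‖ ^ 2 + h * σ ^ 2 + v) := by
  have hcopy := hX.identDistrib_drift n
  have hdrift := hcopy.memLp_iff.1 (hX.memLp_drift hξ hXn)
  have hsample : Measurable (Function.uncurry fun x ω => bb x (U n ω)) :=
    hX.measurable_estimator.comp
      (measurable_fst.prodMk ((hX.measurable_sample n).comp measurable_snd))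
  have hprev : MemLp (X n) 2 P :=
    memLp_of_memLp_add_smul (hX.measurable n).aestronglyMeasurable hLip hh.le hhL
      (memLp_add_smul_mean (hX.measurable n) hsample hh.ne' hmean hdrift)
  calc ∫ ω, ‖X (n + 1) ω‖ ^ 2 ∂P
      = ∫ ω, ‖X n ω + h • bb (X n ω) (U n ω)‖ ^ 2 ∂P + h * ∫ ω, ‖ξ (n + 1) ω‖ ^ 2 ∂P :=
        hX.integral_norm_sq_succ_eq hh.le hξ hξ0 hXn
    _ = ∫ p : Ω × Ω, ‖X n p.1 + h • bb (X n p.1) (U n p.2)‖ ^ 2 ∂(P.prod P)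
          + h * ∫ ω, ‖ξ (n + 1) ω‖ ^ 2 ∂P := by rw [hcopy.norm.sq.integral_eq]
    _ ≤ (1 - h * (2 * M₁ - 2 * h * L ^ 2 - h * σ ^ 2)) * ∫ ω, ‖X n ω‖ ^ 2 ∂P
          + h * (2 * M₂ + 2 * h * ‖b 0‖ ^ 2 + h * σ ^ 2) + h * v := by
        gcongr
        exact integral_norm_add_smul_sq_prod_le hsample hmean hvar hLip hlyap hh hprev hdrift
    _ = _ := by ring

theorem integral_norm_sq_succ_le (hX : IsRandomizedEulerChain P bb h X ξ U)
    (hh : 0 < h) (hhL : h * L < 1) (hLip : ∀ x y, ‖b x - b y‖ ≤ L * ‖x - y‖)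
    (hlyap : ∀ x, ⟪x, b x⟫ ≤ M₂ - M₁ * ‖x‖ ^ 2) (hmean : ∀ x, ∫ ω, bb x (U n ω) ∂P = b x)
    (hvar : ∀ x, ∫ ω, ‖bb x (U n ω) - b x‖ ^ 2 ∂P ≤ σ ^ 2 * (1 + ‖x‖ ^ 2))
    (hξ : MemLp (ξ (n + 1)) 2 P) (hξ0 : ∫ ω, ξ (n + 1) ω ∂P = 0)
    (hξv : ∫ ω, ‖ξ (n + 1) ω‖ ^ 2 ∂P ≤ v)
    (hδ : h * (2 * M₁ - 2 * h * L ^ 2 - h * σ ^ 2) ≤ 1) :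
    ∫ ω, ‖X (n + 1) ω‖ ^ 2 ∂P
      ≤ (1 - h * (2 * M₁ - 2 * h * L ^ 2 - h * σ ^ 2)) * ∫ ω, ‖X n ω‖ ^ 2 ∂P
        + h * (2 * M₂ + 2 * h * ‖b 0‖ ^ 2 + h * σ ^ 2 + v) := by
  by_cases hXn : MemLp (X (n + 1)) 2 P
  · exact hX.integral_norm_sq_succ_le_of_memLp hh hhL hLip hlyap hmean hvar hξ hξ0 hξv hXn
  rw [memLp_two_iff_integrable_sq_norm (hX.measurable (n + 1)).aestronglyMeasurable] at hXn
  rw [integral_undef hXn]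
  have hM₂ : 0 ≤ M₂ := by simpa using hlyap 0
  have hv : 0 ≤ v := (integral_nonneg fun _ => by positivity).trans hξv
  exact add_nonneg (mul_nonneg (sub_nonneg.2 hδ) (integral_nonneg fun _ => by positivity))
    (by positivity)

end InnerProductSpace

end IsRandomizedEulerChain

theorem IsRandomizedEulerChain.integral_norm_sq_le {H E Ω : Type*} [NormedAddCommGroup H]
    [InnerProductSpace ℝ H] [CompleteSpace H] [MeasurableSpace H] [BorelSpace H]
    [SecondCountableTopology H] [MeasurableSpace E] [MeasurableSpace Ω] {P : Measure Ω}
    [IsProbabilityMeasure P] {bb : H → E → H} {h : ℝ} {X ξ : ℕ → Ω → H} {U : ℕ → Ω → E}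
    {b : H → H} {L M₁ M₂ σ v : ℝ} (hX : IsRandomizedEulerChain P bb h X ξ U)
    (hh : 0 < h) (hhL : h * L < 1) (hLip : ∀ x y, ‖b x - b y‖ ≤ L * ‖x - y‖)
    (hlyap : ∀ x, ⟪x, b x⟫ ≤ M₂ - M₁ * ‖x‖ ^ 2) (hmean : ∀ x k, ∫ ω, bb x (U k ω) ∂P = b x)
    (hvar : ∀ x k, ∫ ω, ‖bb x (U k ω) - b x‖ ^ 2 ∂P ≤ σ ^ 2 * (1 + ‖x‖ ^ 2))
    (hξ : ∀ k, MemLp (ξ (k + 1)) 2 P) (hξ0 : ∀ k, ∫ ω, ξ (k + 1) ω ∂P = 0)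
    (hξv : ∀ k, ∫ ω, ‖ξ (k + 1) ω‖ ^ 2 ∂P ≤ v)
    (hM₁ : 2 * h * M₁ ≤ 1) (hc : 0 < M₁ - 2 * h * L ^ 2 - h * σ ^ 2) (n : ℕ) :
    ∫ ω, ‖X n ω‖ ^ 2 ∂P
      ≤ ∫ ω, ‖X 0 ω‖ ^ 2 ∂P
        + (2 * h * ‖b 0‖ ^ 2 + v + M₂ + h * σ ^ 2) / (M₁ - 2 * h * L ^ 2 - h * σ ^ 2) := by
  have hM₂ : 0 ≤ M₂ := by simpa using hlyap 0
  have hv : 0 ≤ v := (integral_nonneg fun _ => by positivity).trans (hξv 0)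
  set c := M₁ - 2 * h * L ^ 2 - h * σ ^ 2
  set δ := 2 * M₁ - 2 * h * L ^ 2 - h * σ ^ 2
  have hsq : 0 ≤ h * (2 * h * L ^ 2 + h * σ ^ 2) := by positivity
  have hcδ : 2 * c ≤ δ := by linarith [show 0 ≤ 2 * h * L ^ 2 + h * σ ^ 2 by positivity]
  have hδ0 : 0 < δ := by linarith
  have hδ1 : h * δ ≤ 1 := by linarith
  calc ∫ ω, ‖X n ω‖ ^ 2 ∂P
      ≤ ∫ ω, ‖X 0 ω‖ ^ 2 ∂P + h * (2 * M₂ + 2 * h * ‖b 0‖ ^ 2 + h * σ ^ 2 + v) / (h * δ) :=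
        le_add_div_of_succ_le_one_sub_mul_add (e := fun n => ∫ ω, ‖X n ω‖ ^ 2 ∂P) (by positivity)
          hδ1 (by positivity) (integral_nonneg fun _ => by positivity)
          (fun k => hX.integral_norm_sq_succ_le hh hhL hLip hlyap (hmean · k) (hvar · k) (hξ k)
            (hξ0 k) (hξv k) hδ1) n
    _ ≤ ∫ ω, ‖X 0 ω‖ ^ 2 ∂P + 2 * (2 * h * ‖b 0‖ ^ 2 + v + M₂ + h * σ ^ 2) / (2 * c) := by
        rw [mul_div_mul_left _ _ hh.ne']
        gcongr
        linarith [show 0 ≤ 2 * h * ‖b 0‖ ^ 2 + h * σ ^ 2 by positivity]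
    _ = _ := by rw [mul_div_mul_left _ _ two_ne_zero]

theorem randomized_euler_chain_uniform_second_moment_general {H E Ω : Type*}
    [NormedAddCommGroup H] [InnerProductSpace ℝ H] [CompleteSpace H] [Nontrivial H]
    [MeasurableSpace H] [BorelSpace H] [SecondCountableTopology H] [MeasurableSpace E]
    [MeasurableSpace Ω] {P : Measure Ω} [IsProbabilityMeasure P] {b : H → H} {bb : H → E → H}
    {L K R σ h v : ℝ} {X ξ : ℕ → Ω → H} {U : ℕ → Ω → E} (hK : 0 < K)
    (hLip : ∀ x y, ‖b x - b y‖ ≤ L * ‖x - y‖) (hb : DissipativeAtInfinity b K R) (hh : 0 < h)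
    (hhK : h < K / (4 * L ^ 2 + 2 * σ ^ 2)) (hX : IsRandomizedEulerChain P bb h X ξ U)
    (hmean : ∀ x k, ∫ ω, bb x (U k ω) ∂P = b x)
    (hvar : ∀ x k, ∫ ω, ‖bb x (U k ω) - b x‖ ^ 2 ∂P ≤ σ ^ 2 * (1 + ‖x‖ ^ 2))
    (hξ : ∀ k, MemLp (ξ (k + 1)) 2 P) (hξ0 : ∀ k, ∫ ω, ξ (k + 1) ω ∂P = 0)
    (hξv : ∀ k, ∫ ω, ‖ξ (k + 1) ω‖ ^ 2 ∂P ≤ v) (n : ℕ) :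
    ∫ ω, ‖X n ω‖ ^ 2 ∂P
      ≤ ∫ ω, ‖X 0 ω‖ ^ 2 ∂P
        + (2 * h * ‖b 0‖ ^ 2 + v
            + (L * (max R (2 * ‖b 0‖ / K)) ^ 2 + ‖b 0‖ * max R (2 * ‖b 0‖ / K))
            + h * σ ^ 2)
          / (K / 2 - 2 * h * L ^ 2 - h * σ ^ 2) := by
  have hKL : K ≤ L := hb.le_of_lipschitz hLip
  have hL : 0 < L := hK.trans_le hKL
  have hstep : h * (4 * L ^ 2 + 2 * σ ^ 2) < K := (lt_div_iff₀ (by positivity)).1 hhK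
  have hhL : h * L < 1 / 4 := by
    have hLhL : L * (4 * (h * L)) < L * 1 := by linarith [show 0 ≤ h * σ ^ 2 by positivity]
    linarith [lt_of_mul_lt_mul_left hLhL hL.le]
  have hr : 2 * ‖b 0‖ / K ≤ max R (2 * ‖b 0‖ / K) := le_max_right _ _
  exact hX.integral_norm_sq_le hh (by linarith) hLip
    (hb.lyapunov hLip hK.le hL.le (le_max_left _ _) ((div_le_iff₀' hK).1 hr)
      (le_trans (by positivity) hr))
    hmean hvar hξ hξ0 hξv (by linarith [mul_le_mul_of_nonneg_left hKL hh.le]) (by linarith) n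

/-- **Lemma (uniform-in-time second-moment bound for the randomized Euler chain).**
Under the Lipschitz and contractivity-at-infinity assumptions on `b`, with
`M₁ = K/2` and `M₂ = L (max(R, 2‖b 0‖/K))² + ‖b 0‖ max(R, 2‖b 0‖/K)`, the randomized
Euler chain `X̄_{k+1} = X̄_k + h b̄(X̄_k, U_k) + √h ξ_{k+1}`, with `X̄₀, (ξ_k), (U_k)`
jointly independent, `b̄(·, U_k)` an unbiased estimator of `b` with variance bounded by
`σ²(1 + ‖x‖²)h^α`, satisfies for every `0 < h < min(K/(4L² + 2σ²), 1)` and `k ≥ 1`: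
`𝔼‖X̄_k‖² ≤ 𝔼‖X̄₀‖² + (2h‖b 0‖² + d + M₂ + hσ²)/(M₁ - 2hL² - hσ²)`. -/
theorem randomized_euler_chain_uniform_second_moment
    {d : ℕ} (hd : 1 ≤ d) (b : EuclideanSpace ℝ (Fin d) → EuclideanSpace ℝ (Fin d))
    (L K R : ℝ) (hL : 0 < L) (hK : 0 < K) (hR : 0 < R)
    (hLip : ∀ x y : EuclideanSpace ℝ (Fin d), ‖b x - b y‖ ≤ L * ‖x - y‖)
    (hContr : ∀ x y : EuclideanSpace ℝ (Fin d), R < ‖x - y‖ →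
      @inner ℝ _ _ (x - y) (b x - b y) ≤ -K * ‖x - y‖ ^ 2)
    {E : Type*} [MeasurableSpace E]
    (bb : EuclideanSpace ℝ (Fin d) → E → EuclideanSpace ℝ (Fin d))
    (hbbmeas : Measurable (Function.uncurry bb))
    (σ α : ℝ) (hσ : 0 < σ) (hα : 0 < α)
    (h : ℝ) (hh : 0 < h) (hh' : h < min (K / (4 * L ^ 2 + 2 * σ ^ 2)) 1)
    {Ω : Type*} [MeasureSpace Ω] [IsProbabilityMeasure (ℙ : Measure Ω)]
    (Xb : ℕ → Ω → EuclideanSpace ℝ (Fin d)) (ξ : ℕ → Ω → EuclideanSpace ℝ (Fin d))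
    (U : ℕ → Ω → E)
    (hXmeas : Measurable (Xb 0)) (hξmeas : ∀ k, Measurable (ξ k))
    (hUmeas : ∀ k, Measurable (U k))
    (hX0sq : Integrable (fun ω => ‖Xb 0 ω‖ ^ 2) ℙ)
    (hξlaw : ∀ k, 1 ≤ k → Measure.map (ξ k) ℙ = stdGaussian d)
    (hUiid : ∀ j k, Measure.map (U j) ℙ = Measure.map (U k) ℙ)
    (hIndep : iIndep (fun i : Option (ℕ ⊕ ℕ) =>
        i.elim (MeasurableSpace.comap (Xb 0) inferInstance)
          (Sum.elim (fun k => MeasurableSpace.comap (ξ k) inferInstance)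
            (fun k => MeasurableSpace.comap (U k) inferInstance))) ℙ)
    (hUnbiased : ∀ (x : EuclideanSpace ℝ (Fin d)) (k : ℕ),
      ∫ ω, bb x (U k ω) ∂ℙ = b x)
    (hVar : ∀ (x : EuclideanSpace ℝ (Fin d)) (k : ℕ),
      ∫ ω, ‖bb x (U k ω) - b x‖ ^ 2 ∂ℙ ≤ σ ^ 2 * (1 + ‖x‖ ^ 2) * h ^ α)
    (hrec : ∀ (k : ℕ) (ω : Ω),
      Xb (k + 1) ω = Xb k ω + h • bb (Xb k ω) (U k ω) + Real.sqrt h • ξ (k + 1) ω)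
    (k : ℕ) (hk : 1 ≤ k) :
    ∫ ω, ‖Xb k ω‖ ^ 2 ∂ℙ
      ≤ ∫ ω, ‖Xb 0 ω‖ ^ 2 ∂ℙ
        + (2 * h * ‖b 0‖ ^ 2 + d
            + (L * (max R (2 * ‖b 0‖ / K)) ^ 2 + ‖b 0‖ * max R (2 * ‖b 0‖ / K))
            + h * σ ^ 2)
          / (K / 2 - 2 * h * L ^ 2 - h * σ ^ 2) := by
  have : Nonempty (Fin d) := Fin.pos_iff_nonempty.1 hd
  have hX : IsRandomizedEulerChain ℙ bb h Xb ξ U :=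
    ⟨hbbmeas, hXmeas, (memLp_two_iff_integrable_sq_norm hXmeas.aestronglyMeasurable).2 hX0sq,
      hξmeas, hUmeas, hIndep, hrec⟩
  have hb : DissipativeAtInfinity b K R := fun x hx => by simpa using hContr x 0 (by simpa using hx)
  have hlaw (k : ℕ) : HasLaw (ξ (k + 1)) (ProbabilityTheory.stdGaussian _) ℙ :=
    ⟨(hξmeas _).aemeasurable,
      (hξlaw _ k.succ_pos).trans (stdGaussian_eq_stdGaussian_euclideanSpace d)⟩
  have hnoise (k : ℕ) : ∫ ω, ‖ξ (k + 1) ω‖ ^ 2 = d := by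
    simpa using ((hlaw k).integral_comp (f := fun x => ‖x‖ ^ 2) (by fun_prop)).trans
      (integral_norm_sq_stdGaussian _)
  have hhα : h ^ α ≤ 1 := Real.rpow_le_one hh.le (hh'.trans_le (min_le_right _ _)).le hα.le
  exact randomized_euler_chain_uniform_second_moment_general hK hLip hb hh
    (hh'.trans_le (min_le_left _ _)) hX hUnbiased
    (fun x k => (hVar x k).trans (mul_le_of_le_one_right (by positivity) hhα))
    (fun k => (hlaw k).hasGaussianLaw.memLp_two)
    (fun k => (hlaw k).integral_eq.trans integral_id_stdGaussian) (fun k => (hnoise k).le) k
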